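/- The rational function H₁(x,y) = (x² − y + 5)² / (x² − y² − y + 2) is a first integral of the planar polynomial vector field P(x,y) = 1 − x² + 11y + 2x²y, Q(x,y) = 2x − 2x³ + 2xy + 4xy²: at every point (x,y) ∈ ℝ² with x² − y² − y + 2 ≠ 0, one has P(x,y)·∂H₁/∂x(x,y) + Q(x,y)·∂H₁/∂y(x,y) = 0. -/

import Mathlib

/-!
Write `A = x² − y + 5` and `B = x² − y² − y + 2`, so `H₁ = A² / B`. The quotient rule gives
`B² ∂ₓH₁ = A (2 A_x B − A B_x)` and `B² ∂_yH₁ = A (2 A_y B − A B_y)`. Here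
`2 A_y B − A B_y = P` and `2 A_x B − A B_x = −Q`, so the gradient of `H₁` is
`(A / B²) (−Q, P)`, which is orthogonal to `(P, Q)`.
-/

/-- The Darboux first integral `H₁(x,y) = (x² − y + 5)² / (x² − y² − y + 2)`. -/
noncomputable def H1 (x y : ℝ) : ℝ := (x^2 - y + 5)^2 / (x^2 - y^2 - y + 2)

/-- The `x`-derivative of `H₁` is `−Q A / B²`. -/
lemma H1_hasDerivAt_fst (x y : ℝ) (h : x^2 - y^2 - y + 2 ≠ 0) :
    HasDerivAt (fun t => H1 t y)
      (-(2*x - 2*x^3 + 2*x*y + 4*x*y^2) * (x^2 - y + 5) / (x^2 - y^2 - y + 2)^2) x := by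
  have hsq : HasDerivAt (fun t : ℝ => t^2) (2*x) x := by simpa using hasDerivAt_pow 2 x
  have hA := ((hsq.sub_const y).add_const 5).fun_pow 2
  have hB := ((hsq.sub_const (y^2)).sub_const y).add_const 2
  refine (hA.fun_div hB h).congr_deriv ?_
  congr 1
  norm_num
  ring

/-- The `y`-derivative of `H₁` is `P A / B²`. -/
lemma H1_hasDerivAt_snd (x y : ℝ) (h : x^2 - y^2 - y + 2 ≠ 0) :
    HasDerivAt (fun t => H1 x t)
      ((1 - x^2 + 11*y + 2*x^2*y) * (x^2 - y + 5) / (x^2 - y^2 - y + 2)^2) y := by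
  have hsq : HasDerivAt (fun t : ℝ => t^2) (2*y) y := by simpa using hasDerivAt_pow 2 y
  have hA := (((hasDerivAt_id' y).const_sub (x^2)).add_const 5).fun_pow 2
  have hB := ((hsq.const_sub (x^2)).fun_sub (hasDerivAt_id' y)).add_const 2
  refine (hA.fun_div hB h).congr_deriv ?_
  congr 1
  norm_num
  ring

/-- `H₁` is a first integral of the vector field
`P = 1 − x² + 11y + 2x²y`, `Q = 2x − 2x³ + 2xy + 4xy²` wherever it is defined. -/
theorem H1_first_integral : ∀ x y : ℝ, x^2 - y^2 - y + 2 ≠ 0 →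
    (1 - x^2 + 11*y + 2*x^2*y) * deriv (fun t => H1 t y) x +
      (2*x - 2*x^3 + 2*x*y + 4*x*y^2) * deriv (fun t => H1 x t) y = 0 := by
  intro x y h
  rw [(H1_hasDerivAt_fst x y h).deriv, (H1_hasDerivAt_snd x y h).deriv]
  ring
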